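/- Let β ≥ 0 be real and let m ≥ n ≥ 0 and t ≥ s ≥ 0 be integers. Then ∫_ℂ conj(z) · Z^{(β)}_{m,n}(z, conj(z)) · conj(Z^{(β)}_{t,s}(z, conj(z))) dν(z) = 0 if t−s ≠ m−n−1, and if t−s = m−n−1 (so in particular m ≥ n+1) it equals [(−1)^{n+s} (−β−m)_n (−β−t)_s Γ(m−n+β+1)/(n!·s!)] · Σ_{j=0}^{n} Σ_{k=0}^{s} [(β+m−n+1)_{j+k} (−n)_j (−s)_k / ((β+m−n+1)_j (β+m−n)_k · j!·k!)]. -/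

import Mathlib

open MeasureTheory Finset

/-- Pochhammer symbol `(a)_j = a (a+1) ⋯ (a+j-1)`. -/
noncomputable def poch (a : ℝ) (j : ℕ) : ℝ := ∏ i ∈ Finset.range j, (a + i)

/-- The generalized 2D Laguerre polynomial `Z^{(β)}_{m,n}(z,w)` (for `m ≥ n`). -/
noncomputable def Zc (β : ℝ) (m n : ℕ) (z w : ℂ) : ℂ :=
  ∑ k ∈ Finset.range (n + 1),
    (((-1 : ℝ) ^ (n - k) * poch (β + 1) m /
        (k.factorial * (n - k).factorial * poch (β + 1) (m - k)) : ℝ) : ℂ) *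
      z ^ (m - k) * w ^ (n - k)

/-!
With `L_n^{(α)}` the classical Laguerre polynomial, `Z^{(β)}_{n+d,n}(z, w) = z^d L_n^{(β+d)}(zw)`.
On `w = z̄` the second factor depends only on `|z|²`, so for `d = m - n` and `e = t - s` the
integrand is `z^d z̄^(e+1)` times a radial function. Rotating the plane by `π / (d - (e + 1))`
negates it if `d ≠ e + 1`; if `d = e + 1` the integrand is itself radial, and integrating the
product of the two Laguerre polynomials term by term gives Gamma values that assemble into an
Appell `F₂`.
-/

section Pochhammer

theorem poch_eq_eval_ascPochhammer (a : ℝ) (j : ℕ) : poch a j = (ascPochhammer ℝ j).eval a := by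
  induction j with
  | zero => simp [poch]
  | succ j ih => rw [ascPochhammer_succ_eval, ← ih, poch, prod_range_succ, poch]

theorem poch_pos {a : ℝ} (ha : 0 < a) (j : ℕ) : 0 < poch a j :=
  poch_eq_eval_ascPochhammer a j ▸ ascPochhammer_pos j a ha

theorem poch_add (a : ℝ) (i j : ℕ) : poch a (i + j) = poch a i * poch (a + i) j := by
  simp only [poch, prod_range_add, Nat.cast_add, add_assoc]

theorem neg_one_pow_mul_poch_neg_sub_natCast (a : ℝ) (n : ℕ) :
    (-1) ^ n * poch (-a - n) n = poch (a + 1) n := by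
  rw [← neg_add', poch_eq_eval_ascPochhammer, poch_eq_eval_ascPochhammer,
    ascPochhammer_eval_neg_eq_descPochhammer, descPochhammer_eval_eq_ascPochhammer,
    add_sub_cancel_right, ← mul_assoc, ← mul_pow, neg_one_mul, neg_neg, one_pow, one_mul]

theorem poch_neg_natCast (n j : ℕ) : poch (-(n : ℝ)) j = (-1) ^ j * n.descFactorial j := by
  rw [poch_eq_eval_ascPochhammer, ascPochhammer_eval_neg_eq_descPochhammer,
    descPochhammer_eval_eq_descFactorial]

theorem Gamma_add_natCast {a : ℝ} (ha : ∀ k : ℕ, a ≠ -k) (j : ℕ) :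
    Real.Gamma (a + j) = Real.Gamma a * poch a j := by
  induction j with
  | zero => simp [poch]
  | succ j ih =>
    have ha_add : a + j ≠ 0 := fun h => ha j (eq_neg_of_add_eq_zero_left h)
    rw [Nat.cast_succ, ← add_assoc, Real.Gamma_add_one ha_add, ih, poch, poch, prod_range_succ]
    ring

end Pochhammer

section Radial

theorem measurePreserving_withDensity_comp {X Y : Type*} [MeasurableSpace X] [MeasurableSpace Y]
    {μ : Measure X} {μ' : Measure Y} {f : X → Y} (hf : MeasurePreserving f μ μ')
    {ρ : Y → ENNReal} (hρ : Measurable ρ) :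
    MeasurePreserving f (μ.withDensity (ρ ∘ f)) (μ'.withDensity ρ) := by
  refine ⟨hf.measurable, Measure.ext fun s hs => ?_⟩
  rw [Measure.map_apply hf.measurable hs, withDensity_apply _ (hf.measurable hs),
    withDensity_apply _ hs]
  exact hf.setLIntegral_comp_preimage hs hρ

theorem exists_circle_pow_mul_conj_pow_eq_neg_one {a b : ℕ} (hab : a ≠ b) :
    ∃ c : Circle, (c : ℂ) ^ a * starRingEnd ℂ (c : ℂ) ^ b = -1 := by
  have hab' : (a : ℂ) - b ≠ 0 := sub_ne_zero.2 (Nat.cast_injective.ne hab)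
  refine ⟨Circle.exp (Real.pi / (a - b)), ?_⟩
  rw [Circle.coe_exp, ← Complex.exp_conj, ← Complex.exp_nat_mul, ← Complex.exp_nat_mul,
    ← Complex.exp_add, ← Complex.exp_pi_mul_I]
  congr 1
  simp only [map_mul, Complex.conj_ofReal, Complex.conj_I]
  push_cast
  field_simp
  ring

theorem integral_pow_mul_conj_pow_mul_radial_eq_zero {μ : Measure ℂ}
    (hμ : ∀ c : Circle, MeasurePreserving (rotation c) μ μ) {a b : ℕ} (hab : a ≠ b) (g : ℝ → ℂ) :
    ∫ z, z ^ a * starRingEnd ℂ z ^ b * g ‖z‖ ∂μ = 0 := by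
  obtain ⟨c, hc⟩ := exists_circle_pow_mul_conj_pow_eq_neg_one hab
  set f : ℂ → ℂ := fun z => z ^ a * starRingEnd ℂ z ^ b * g ‖z‖ with hf
  have f_rotation (z : ℂ) : f (rotation c z) = -f z := by
    simp only [hf, rotation_apply, norm_mul, Circle.norm_coe, one_mul, map_mul, mul_pow]
    linear_combination (z ^ a * starRingEnd ℂ z ^ b * g ‖z‖) * hc
  have integral_eq_neg : ∫ z, f z ∂μ = -∫ z, f z ∂μ := by
    rw [← integral_neg, ← (hμ c).integral_comp (rotation c).toHomeomorph.measurableEmbedding f]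
    simp only [f_rotation]
  exact self_eq_neg.1 integral_eq_neg

end Radial

section LaguerreMeasure

/-- The measure `dν(z) = π⁻¹ |z|^{2β} e^{-|z|²} dA(z)` on `ℂ` for which the polynomials
`Z^{(β)}_{m,n}(z, z̄)` are orthogonal. -/
noncomputable def laguerreMeasure (β : ℝ) : Measure ℂ :=
  volume.withDensity fun z =>
    ENNReal.ofReal (Real.pi⁻¹ * ‖z‖ ^ (2 * β) * Real.exp (-(‖z‖ ^ 2)))

theorem measurePreserving_rotation_laguerreMeasure (β : ℝ) (c : Circle) :
    MeasurePreserving (rotation c) (laguerreMeasure β) (laguerreMeasure β) := by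
  have h := measurePreserving_withDensity_comp (rotation c).measurePreserving
    (ρ := fun z => ENNReal.ofReal (Real.pi⁻¹ * ‖z‖ ^ (2 * β) * Real.exp (-(‖z‖ ^ 2))))
    (by fun_prop)
  simpa only [laguerreMeasure, Function.comp_def, LinearIsometryEquiv.norm_map] using h

theorem integral_laguerreMeasure (β : ℝ) (f : ℂ → ℝ) :
    ∫ z, f z ∂laguerreMeasure β =
      ∫ z, Real.pi⁻¹ * ‖z‖ ^ (2 * β) * Real.exp (-(‖z‖ ^ 2)) * f z := by
  rw [laguerreMeasure, integral_withDensity_eq_integral_toReal_smul (by fun_prop)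
    (ae_of_all _ fun _ => ENNReal.ofReal_lt_top)]
  refine integral_congr_ae (ae_of_all _ fun z => ?_)
  dsimp only
  rw [ENNReal.toReal_ofReal (by positivity), smul_eq_mul]

theorem integral_norm_sq_pow_laguerreMeasure {β : ℝ} {a : ℕ} (ha : -1 < β + a) :
    ∫ z, (‖z‖ ^ 2) ^ a ∂laguerreMeasure β = Real.Gamma (β + a + 1) := by
  have integrand_eq : ∀ᵐ z : ℂ,
      Real.pi⁻¹ * ‖z‖ ^ (2 * β) * Real.exp (-(‖z‖ ^ 2)) * (‖z‖ ^ 2) ^ a =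
        Real.pi⁻¹ * (‖z‖ ^ (2 * (β + a)) * Real.exp (-‖z‖ ^ (2 : ℝ))) := by
    filter_upwards [Measure.ae_ne volume 0] with z hz
    have hpow : ‖z‖ ^ (2 * (β + a)) = ‖z‖ ^ (2 * β) * (‖z‖ ^ 2) ^ a := by
      rw [← pow_mul, ← Real.rpow_add_natCast (norm_ne_zero_iff.2 hz)]
      push_cast
      ring_nf
    rw [hpow, Real.rpow_two]
    ring
  rw [integral_laguerreMeasure, integral_congr_ae integrand_eq, integral_const_mul,
    Complex.integral_rpow_mul_exp_neg_rpow one_le_two (by linarith),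
    show (2 * (β + a) + 2) / 2 = β + a + 1 by ring]
  field_simp

theorem integrable_norm_sq_pow_laguerreMeasure {β : ℝ} {a : ℕ} (ha : -1 < β + a) :
    Integrable (fun z => (‖z‖ ^ 2) ^ a) (laguerreMeasure β) := by
  refine .of_integral_ne_zero ?_
  rw [integral_norm_sq_pow_laguerreMeasure ha]
  exact (Real.Gamma_pos_of_pos (by linarith)).ne'

theorem integral_norm_sq_pow_mul_sum_laguerreMeasure {β : ℝ} {a : ℕ} (ha : -1 < β + a)
    {ι : Type*} (S : Finset ι) (c : ι → ℝ) (p : ι → ℕ) :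
    ∫ z, (‖z‖ ^ 2) ^ a * ∑ i ∈ S, c i * (‖z‖ ^ 2) ^ p i ∂laguerreMeasure β =
      Real.Gamma (β + a + 1) * ∑ i ∈ S, c i * poch (β + a + 1) (p i) := by
  have ha_add (i : ℕ) : -1 < β + (a + i : ℕ) := by
    push_cast
    linarith [i.cast_nonneg (α := ℝ)]
  have hnonpole (i : ℕ) : β + a + 1 ≠ -i := by linarith [i.cast_nonneg (α := ℝ)]
  have integrand_eq (z : ℂ) : (‖z‖ ^ 2) ^ a * ∑ i ∈ S, c i * (‖z‖ ^ 2) ^ p i =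
      ∑ i ∈ S, c i * (‖z‖ ^ 2) ^ (a + p i) := by
    simp only [mul_sum, pow_add, mul_left_comm]
  simp only [integrand_eq, mul_sum]
  rw [integral_finsetSum S fun i _ =>
    (integrable_norm_sq_pow_laguerreMeasure (ha_add (p i))).const_mul (c i)]
  refine sum_congr rfl fun i _ => ?_
  rw [integral_const_mul, integral_norm_sq_pow_laguerreMeasure (ha_add _), Nat.cast_add,
    ← add_assoc, add_right_comm _ (p i : ℝ), Gamma_add_natCast hnonpole, mul_left_comm]

end LaguerreMeasure

section Laguerre

/-- The Laguerre polynomial `L_n^{(α)}(x) = (α+1)_n / n! · ₁F₁(-n; α+1; x)`, in terms of which both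
the polynomials `Zc` and their integrals are computed. The hypergeometric form of the coefficients
is chosen to match the Appell sum; it is only meaningful if `(α+1)_n ≠ 0`. -/
noncomputable def laguerrePoly (α : ℝ) (n : ℕ) : Polynomial ℝ :=
  ∑ j ∈ range (n + 1), Polynomial.monomial j
    (poch (α + 1) n / n.factorial * (poch (-(n : ℝ)) j / (poch (α + 1) j * j.factorial)))

/-- The terminating Appell function `F₂(a; -n, -s; c, c'; x, y)`, the value of the Laplace-type
integral of a product of two Laguerre polynomials. -/
noncomputable def appellF2 (a : ℝ) (n s : ℕ) (c c' x y : ℝ) : ℝ :=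
  ∑ j ∈ range (n + 1), ∑ k ∈ range (s + 1),
    poch a (j + k) * poch (-(n : ℝ)) j * poch (-(s : ℝ)) k /
      (poch c j * poch c' k * j.factorial * k.factorial) * x ^ j * y ^ k

theorem eval_laguerrePoly (α : ℝ) (n : ℕ) (x : ℝ) :
    (laguerrePoly α n).eval x = poch (α + 1) n / n.factorial *
      ∑ j ∈ range (n + 1), poch (-(n : ℝ)) j / (poch (α + 1) j * j.factorial) * x ^ j := by
  simp only [laguerrePoly, Polynomial.eval_finsetSum, Polynomial.eval_monomial, mul_sum, mul_assoc]

theorem eval_laguerrePoly_mul_eval_laguerrePoly (α α' : ℝ) (n s : ℕ) (x y r : ℝ) :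
    (laguerrePoly α n).eval (x * r) * (laguerrePoly α' s).eval (y * r) =
      poch (α + 1) n / n.factorial * (poch (α' + 1) s / s.factorial) *
        ∑ i ∈ range (n + 1) ×ˢ range (s + 1),
          poch (-(n : ℝ)) i.1 / (poch (α + 1) i.1 * i.1.factorial) * x ^ i.1 *
            (poch (-(s : ℝ)) i.2 / (poch (α' + 1) i.2 * i.2.factorial) * y ^ i.2) *
              r ^ (i.1 + i.2) := by
  rw [eval_laguerrePoly, eval_laguerrePoly, mul_mul_mul_comm, sum_mul_sum, ← sum_product']
  congr 1
  refine sum_congr rfl fun i _ => ?_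
  ring

theorem integral_laguerrePoly_mul_laguerrePoly {β : ℝ} {a : ℕ} (ha : -1 < β + a)
    (α α' : ℝ) (n s : ℕ) (x y : ℝ) :
    ∫ z, (‖z‖ ^ 2) ^ a * ((laguerrePoly α n).eval (x * ‖z‖ ^ 2) *
        (laguerrePoly α' s).eval (y * ‖z‖ ^ 2)) ∂laguerreMeasure β =
      poch (α + 1) n / n.factorial * (poch (α' + 1) s / s.factorial) *
        (Real.Gamma (β + a + 1) * appellF2 (β + a + 1) n s (α + 1) (α' + 1) x y) := by
  simp only [eval_laguerrePoly_mul_eval_laguerrePoly, mul_left_comm ((_ : ℝ) ^ a)]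
  rw [integral_const_mul, integral_norm_sq_pow_mul_sum_laguerreMeasure ha, sum_product, appellF2]
  congr 2
  refine sum_congr rfl fun j _ => sum_congr rfl fun k _ => ?_
  ring

theorem Zc_coeff_eq {β : ℝ} {d : ℕ} (hd : poch (β + 1) d ≠ 0) {n j : ℕ} (hj : j ≤ n) :
    (-1 : ℝ) ^ j * poch (β + 1) (n + d) / ((n - j).factorial * j.factorial * poch (β + 1) (d + j)) =
      poch (β + d + 1) n / n.factorial *
        (poch (-(n : ℝ)) j / (poch (β + d + 1) j * j.factorial)) := by
  have hfact : (n.factorial : ℝ) = (n - j).factorial * n.descFactorial j := by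
    exact_mod_cast (Nat.factorial_mul_descFactorial hj).symm
  have hdesc : (n.descFactorial j : ℝ) ≠ 0 := by
    exact_mod_cast (Nat.descFactorial_pos.2 hj).ne'
  rw [add_comm n d, poch_add _ d n, poch_add _ d j, add_right_comm β 1, poch_neg_natCast, hfact]
  field_simp

theorem Zc_eq_pow_mul_laguerrePoly {β : ℝ} {d : ℕ} (hd : poch (β + 1) d ≠ 0) (n : ℕ) (z w : ℂ) :
    Zc β (n + d) n z w = z ^ d * Polynomial.aeval (z * w) (laguerrePoly (β + d) n) := by
  simp only [Zc, laguerrePoly, map_sum, Polynomial.aeval_monomial, mul_sum]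
  rw [← sum_range_reflect]
  refine sum_congr rfl fun j hj => ?_
  have hj : j ≤ n := mem_range_succ_iff.1 hj
  rw [← Zc_coeff_eq hd hj, show n + 1 - 1 - j = n - j by omega, Nat.sub_sub_self hj,
    show n + d - (n - j) = d + j by omega, Complex.coe_algebraMap]
  ring

theorem Zc_conj_eq_pow_mul_laguerrePoly {β : ℝ} {d : ℕ} (hd : poch (β + 1) d ≠ 0) (n : ℕ) (z : ℂ) :
    Zc β (n + d) n z (starRingEnd ℂ z) =
      z ^ d * ((laguerrePoly (β + d) n).eval (‖z‖ ^ 2) : ℝ) := by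
  rw [Zc_eq_pow_mul_laguerrePoly hd, Complex.mul_conj', ← Complex.ofReal_pow,
    ← Complex.coe_algebraMap, Polynomial.aeval_algebraMap_apply_eq_algebraMap_eval]

theorem conj_mul_Zc_mul_conj_Zc {β : ℝ} {d e : ℕ} (hd : poch (β + 1) d ≠ 0)
    (he : poch (β + 1) e ≠ 0) (n s : ℕ) (z : ℂ) :
    starRingEnd ℂ z * Zc β (n + d) n z (starRingEnd ℂ z) *
        starRingEnd ℂ (Zc β (s + e) s z (starRingEnd ℂ z)) =
      z ^ d * starRingEnd ℂ z ^ (e + 1) * (((laguerrePoly (β + d) n).eval (‖z‖ ^ 2) *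
        (laguerrePoly (β + e) s).eval (‖z‖ ^ 2) : ℝ) : ℂ) := by
  rw [Zc_conj_eq_pow_mul_laguerrePoly hd, Zc_conj_eq_pow_mul_laguerrePoly he]
  simp only [map_mul, map_pow, Complex.conj_ofReal, Complex.ofReal_mul]
  ring

theorem integral_conj_mul_Zc_mul_conj_Zc_eq_zero {β : ℝ} {d e : ℕ} (hd : poch (β + 1) d ≠ 0)
    (he : poch (β + 1) e ≠ 0) (hde : d ≠ e + 1) (n s : ℕ) :
    ∫ z, starRingEnd ℂ z * Zc β (n + d) n z (starRingEnd ℂ z) *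
        starRingEnd ℂ (Zc β (s + e) s z (starRingEnd ℂ z)) ∂laguerreMeasure β = 0 := by
  simp only [conj_mul_Zc_mul_conj_Zc hd he]
  exact integral_pow_mul_conj_pow_mul_radial_eq_zero
    (measurePreserving_rotation_laguerreMeasure β) hde fun r =>
      ((laguerrePoly (β + d) n).eval (r ^ 2) * (laguerrePoly (β + e) s).eval (r ^ 2) : ℝ)

theorem integral_conj_mul_Zc_mul_conj_Zc_eq_appellF2 {β : ℝ} {e : ℕ}
    (he : poch (β + 1) (e + 1) ≠ 0) (hβ : -1 < β + (e + 1 : ℕ)) (n s : ℕ) :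
    ∫ z, starRingEnd ℂ z * Zc β (n + (e + 1)) n z (starRingEnd ℂ z) *
        starRingEnd ℂ (Zc β (s + e) s z (starRingEnd ℂ z)) ∂laguerreMeasure β =
      (poch (β + (e + 1 : ℕ) + 1) n / n.factorial * (poch (β + e + 1) s / s.factorial) *
        (Real.Gamma (β + (e + 1 : ℕ) + 1) *
          appellF2 (β + (e + 1 : ℕ) + 1) n s (β + (e + 1 : ℕ) + 1) (β + e + 1) 1 1) : ℝ) := by
  have he' : poch (β + 1) e ≠ 0 := left_ne_zero_of_mul (poch_add (β + 1) e 1 ▸ he)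
  have integrand_eq (z : ℂ) :
      starRingEnd ℂ z * Zc β (n + (e + 1)) n z (starRingEnd ℂ z) *
          starRingEnd ℂ (Zc β (s + e) s z (starRingEnd ℂ z)) =
        (((‖z‖ ^ 2) ^ (e + 1) * ((laguerrePoly (β + (e + 1 : ℕ)) n).eval (1 * ‖z‖ ^ 2) *
          (laguerrePoly (β + e) s).eval (1 * ‖z‖ ^ 2)) : ℝ) : ℂ) := by
    rw [conj_mul_Zc_mul_conj_Zc he he', ← mul_pow, Complex.mul_conj', one_mul]
    norm_cast
  simp only [integrand_eq, integral_complex_ofReal, integral_laguerrePoly_mul_laguerrePoly hβ]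

end Laguerre

theorem laguerre2D_integral_zbar_general {β : ℝ} (hβ : -1 < β) {m n t s : ℕ}
    (hmn : n ≤ m) (hts : s ≤ t) :
    (((t : ℤ) - s ≠ (m : ℤ) - n - 1) →
      ∫ z : ℂ, starRingEnd ℂ z * Zc β m n z (starRingEnd ℂ z) *
          starRingEnd ℂ (Zc β t s z (starRingEnd ℂ z)) ∂laguerreMeasure β = 0) ∧
    (((t : ℤ) - s = (m : ℤ) - n - 1) →
      ∫ z : ℂ, starRingEnd ℂ z * Zc β m n z (starRingEnd ℂ z) *
          starRingEnd ℂ (Zc β t s z (starRingEnd ℂ z)) ∂laguerreMeasure β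
        = (((-1 : ℝ) ^ (n + s) * poch (-β - m) n * poch (-β - t) s *
              Real.Gamma ((m : ℝ) - n + β + 1) / (n.factorial * s.factorial) *
            appellF2 (β + (m : ℝ) - n + 1) n s (β + (m : ℝ) - n + 1) (β + (m : ℝ) - n) 1 1 : ℝ) :
            ℂ)) := by
  obtain ⟨d, rfl⟩ := Nat.exists_eq_add_of_le hmn
  obtain ⟨e, rfl⟩ := Nat.exists_eq_add_of_le hts
  have hpoch (i : ℕ) : poch (β + 1) i ≠ 0 := (poch_pos (by linarith) i).ne'
  constructor
  · intro hne
    exact integral_conj_mul_Zc_mul_conj_Zc_eq_zero (hpoch d) (hpoch e)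
      (by push_cast at hne; omega) n s
  · intro heq
    obtain rfl : d = e + 1 := by push_cast at heq; omega
    rw [integral_conj_mul_Zc_mul_conj_Zc_eq_appellF2 (hpoch _)
      (by linarith [(e + 1).cast_nonneg (α := ℝ)]), ← neg_one_pow_mul_poch_neg_sub_natCast,
      ← neg_one_pow_mul_poch_neg_sub_natCast]
    push_cast
    ring_nf

/-- Integral formula for `∫ z̄ Z^{(β)}_{m,n}(z,z̄) conj(Z^{(β)}_{t,s}(z,z̄)) dν(z)`,
with `dν(z) = π⁻¹ |z|^{2β} e^{−|z|²} dA(z)`. -/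
theorem laguerre2D_integral_zbar (β : ℝ) (hβ : 0 ≤ β) (m n t s : ℕ)
    (hmn : n ≤ m) (hts : s ≤ t)
    (ν : Measure ℂ)
    (hν : ν = volume.withDensity (fun z =>
      ENNReal.ofReal (Real.pi⁻¹ * ‖z‖ ^ (2 * β) * Real.exp (-(‖z‖ ^ 2))))) :
    (((t : ℤ) - s ≠ (m : ℤ) - n - 1) →
      ∫ z : ℂ, starRingEnd ℂ z * Zc β m n z (starRingEnd ℂ z) *
          starRingEnd ℂ (Zc β t s z (starRingEnd ℂ z)) ∂ν = 0) ∧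
    (((t : ℤ) - s = (m : ℤ) - n - 1) →
      ∫ z : ℂ, starRingEnd ℂ z * Zc β m n z (starRingEnd ℂ z) *
          starRingEnd ℂ (Zc β t s z (starRingEnd ℂ z)) ∂ν
        = ((((-1 : ℝ) ^ (n + s) * poch (-β - m) n * poch (-β - t) s *
              Real.Gamma ((m : ℝ) - n + β + 1) / (n.factorial * s.factorial)) *
            ∑ j ∈ Finset.range (n + 1), ∑ k ∈ Finset.range (s + 1),
              poch (β + (m : ℝ) - n + 1) (j + k) * poch (-(n : ℝ)) j * poch (-(s : ℝ)) k /
                (poch (β + (m : ℝ) - n + 1) j * poch (β + (m : ℝ) - n) k *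
                  j.factorial * k.factorial) : ℝ) : ℂ)) := by
  subst hν
  simpa only [appellF2, laguerreMeasure, one_pow, mul_one] using
    laguerre2D_integral_zbar_general (by linarith) hmn hts
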